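/- Let V and V' be finite-dimensional vector spaces over a field K, and g, g' endomorphisms of V, V'. Then each coefficient of the characteristic polynomial of g ⊗ g' on V ⊗ V' is an integral polynomial expression (independent of K, g, g') in the coefficients of the characteristic polynomials of g on V and of g' on V'. In particular, if these two characteristic polynomials have coefficients in a subring R ⊆ K, then so does the characteristic polynomial of g ⊗ g'. -/

import Mathlib

open Polynomial

/-!
Over a commutative ring `R`, regard `1 - X • (A ⊗ₖ B)` as a block matrix whose blocks lie in the
commutative subalgebra generated by `X • B`. Its determinant can be taken in two steps, first over
that subalgebra and then over `R[X]`, and the first step gives the reversed characteristic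
polynomial of `A` evaluated at `X • B`. So the characteristic polynomial of `A ⊗ₖ B` depends on `A`
only through its characteristic polynomial, and by symmetry the same holds for `B`. One may
therefore replace `A` and `B` by companion matrices, and these are specializations of the companion
matrices of free monic polynomials, whose coefficients are variables over `ℤ`.
-/

open scoped Kronecker

section Kronecker

variable {R l l' m m' : Type*} [CommRing R]
  [DecidableEq l] [Fintype m] [DecidableEq m]

theorem charpoly_eq_reflect_charpolyRev (A : Matrix m m R) :
    A.charpoly = A.charpolyRev.reflect (Fintype.card m) := by
  nontriviality R
  rw [← Matrix.reverse_charpoly, reverse, Matrix.charpoly_natDegree_eq_dim, reflect_reflect]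

theorem one_sub_X_smul_kronecker_eq_comp (A : Matrix l l R) (B : Matrix m m R) :
    1 - (X : R[X]) • (A ⊗ₖ B).map C =
      Matrix.comp l l m m R[X]
        ((1 - (X : R[X]) • A.map C).map (aeval (R := R) ((X : R[X]) • B.map C))) := by
  ext1 ⟨i, k⟩ ⟨j, k'⟩
  by_cases hij : i = j
  · subst hij
    simp [Matrix.one_apply, Algebra.algebraMap_eq_smul_one, smul_eq_C_mul]
  · simp [hij, Algebra.algebraMap_eq_smul_one, smul_eq_C_mul]

variable [Fintype l] [Fintype l'] [DecidableEq l'] [Fintype m'] [DecidableEq m']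

theorem charpolyRev_kronecker (A : Matrix l l R) (B : Matrix m m R) :
    (A ⊗ₖ B).charpolyRev =
      (aeval (R := R) ((X : R[X]) • B.map C) A.charpolyRev).det := by
  rw [Matrix.charpolyRev, one_sub_X_smul_kronecker_eq_comp]
  exact (Matrix.det_det (M := 1 - (X : R[X]) • A.map C)
    (aeval (R := R) ((X : R[X]) • B.map C)).toRingHom).symm

theorem charpoly_kronecker (A : Matrix l l R) (B : Matrix m m R) :
    (A ⊗ₖ B).charpoly =
      reflect (Fintype.card l * Fintype.card m)
        (aeval (R := R) ((X : R[X]) • B.map C) A.charpoly.reverse).det := by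
  rw [charpoly_eq_reflect_charpolyRev, Fintype.card_prod, charpolyRev_kronecker,
    Matrix.reverse_charpoly]

theorem charpoly_kronecker_comm (A : Matrix l l R) (B : Matrix m m R) :
    (A ⊗ₖ B).charpoly = (B ⊗ₖ A).charpoly := by
  rw [← Matrix.charpoly_reindex (Equiv.prodComm l m)]
  congr 1
  ext ⟨i, k⟩ ⟨j, k'⟩
  exact mul_comm _ _

theorem charpoly_kronecker_congr_left {A : Matrix l l R} {A' : Matrix l' l' R}
    (h : A.charpoly = A'.charpoly) (B : Matrix m m R) :
    (A ⊗ₖ B).charpoly = (A' ⊗ₖ B).charpoly := by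
  nontriviality R
  have hcard : Fintype.card l = Fintype.card l' := by
    rw [← A.charpoly_natDegree_eq_dim, h, A'.charpoly_natDegree_eq_dim]
  rw [charpoly_kronecker, charpoly_kronecker, h, hcard]

theorem charpoly_kronecker_congr {A : Matrix l l R} {A' : Matrix l' l' R}
    {B : Matrix m m R} {B' : Matrix m' m' R}
    (hA : A.charpoly = A'.charpoly) (hB : B.charpoly = B'.charpoly) :
    (A ⊗ₖ B).charpoly = (A' ⊗ₖ B').charpoly :=
  calc
    (A ⊗ₖ B).charpoly = (A' ⊗ₖ B).charpoly := charpoly_kronecker_congr_left hA B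
    _ = (B ⊗ₖ A').charpoly := charpoly_kronecker_comm A' B
    _ = (B' ⊗ₖ A').charpoly := charpoly_kronecker_congr_left hB A'
    _ = (A' ⊗ₖ B').charpoly := charpoly_kronecker_comm B' A'

theorem charpoly_tensorProduct_map_eq_charpoly_kronecker {V V' : Type*}
    [AddCommGroup V] [Module R V] [Module.Free R V] [Module.Finite R V]
    [AddCommGroup V'] [Module R V'] [Module.Free R V'] [Module.Finite R V']
    {g : V →ₗ[R] V} {g' : V' →ₗ[R] V'} {A : Matrix l l R} {B : Matrix m m R}
    (hA : A.charpoly = g.charpoly) (hB : B.charpoly = g'.charpoly) :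
    (TensorProduct.map g g').charpoly = (A ⊗ₖ B).charpoly := by
  let b := Module.Free.chooseBasis R V
  let b' := Module.Free.chooseBasis R V'
  rw [← LinearMap.charpoly_toMatrix _ (b.tensorProduct b'), TensorProduct.toMatrix_map]
  exact charpoly_kronecker_congr ((g.charpoly_toMatrix b).trans hA.symm)
    ((g'.charpoly_toMatrix b').trans hB.symm)

end Kronecker

section Companion

variable {R : Type*} [CommRing R]

/-- The companion matrix of a monic polynomial `p`, encoded as the matrix of multiplication by the
root of `p` in the power basis of `R[X] / (p)`. It serves as a canonical matrix with
characteristic polynomial `p`. -/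
noncomputable def companionMatrix {p : R[X]} (hp : p.Monic) :
    Matrix (Fin p.natDegree) (Fin p.natDegree) R :=
  Algebra.leftMulMatrix (AdjoinRoot.powerBasisAux' hp) (AdjoinRoot.root p)

theorem charpoly_companionMatrix {p : R[X]} (hp : p.Monic) :
    (companionMatrix hp).charpoly = p := by
  nontriviality R
  have root_charpoly : aeval (AdjoinRoot.root p) (companionMatrix hp).charpoly = 0 := by
    apply Algebra.leftMulMatrix_injective (AdjoinRoot.powerBasisAux' hp)
    rw [map_zero, ← aeval_algHom_apply]
    exact Matrix.aeval_self_charpoly (companionMatrix hp)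
  have dvd_charpoly : p ∣ (companionMatrix hp).charpoly := by
    rwa [← AdjoinRoot.mk_eq_zero, ← AdjoinRoot.aeval_eq]
  exact eq_of_monic_of_dvd_of_natDegree_le hp (Matrix.charpoly_monic _) dvd_charpoly (by simp)

end Companion

section Universal

theorem map_aeval_freeMonic {R S : Type*} [CommRing R] [CommRing S] [Algebra R S] {n : ℕ} {p : S[X]}
    (hp : p.Monic) (hn : p.natDegree = n) :
    (freeMonic R n).map (MvPolynomial.aeval fun i : Fin n ↦ p.coeff i).toRingHom = p :=
  congrArg Subtype.val <| (MvPolynomial.mapEquivMonic R S n).apply_symm_apply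
    ⟨p, by rw [← hn]; exact hp.coeff_natDegree, fun _ hi ↦ coeff_eq_zero_of_natDegree_lt (hn ▸ hi)⟩

theorem charpoly_map_companionMatrix_freeMonic {R : Type*} [CommRing R] {n : ℕ} {p : R[X]}
    (hp : p.Monic) (hn : p.natDegree = n) :
    ((companionMatrix (monic_freeMonic ℤ n)).map
      (MvPolynomial.aeval fun i : Fin n ↦ p.coeff i)).charpoly = p :=
  calc
    _ = (companionMatrix (monic_freeMonic ℤ n)).charpoly.map
          (MvPolynomial.aeval fun i : Fin n ↦ p.coeff i).toRingHom := Matrix.charpoly_map _ _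
    _ = p := by rw [charpoly_companionMatrix, map_aeval_freeMonic hp hn]

/-- The universal characteristic polynomial of a Kronecker product of an `n × n` matrix and an
`n' × n'` matrix: the two sets of variables stand for the non-leading coefficients of the
characteristic polynomials of the factors. It is realised by companion matrices of the two free
monic polynomials. -/
noncomputable def universalKroneckerCharpoly (n n' : ℕ) :
    (MvPolynomial (Fin n ⊕ Fin n') ℤ)[X] :=
  ((companionMatrix (monic_freeMonic ℤ n)).map (MvPolynomial.rename Sum.inl) ⊗ₖ
    (companionMatrix (monic_freeMonic ℤ n')).map (MvPolynomial.rename Sum.inr)).charpoly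

theorem map_universalKroneckerCharpoly {R : Type*} [CommRing R] {n n' : ℕ}
    (x : Fin n → R) (y : Fin n' → R) :
    (universalKroneckerCharpoly n n').map (MvPolynomial.aeval (Sum.elim x y)).toRingHom =
      ((companionMatrix (monic_freeMonic ℤ n)).map (MvPolynomial.aeval x) ⊗ₖ
        (companionMatrix (monic_freeMonic ℤ n')).map (MvPolynomial.aeval y)).charpoly := by
  rw [universalKroneckerCharpoly, ← Matrix.charpoly_map]
  congr 1
  ext ⟨i, k⟩ ⟨j, k'⟩
  simp [MvPolynomial.aeval_rename]

variable {K V V' : Type*} [CommRing K]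
  [AddCommGroup V] [Module K V] [Module.Free K V] [Module.Finite K V]
  [AddCommGroup V'] [Module K V'] [Module.Free K V'] [Module.Finite K V']

theorem charpoly_tensorProduct_map (g : V →ₗ[K] V) (g' : V' →ₗ[K] V') :
    (TensorProduct.map g g').charpoly =
      (universalKroneckerCharpoly (Module.finrank K V) (Module.finrank K V')).map
        (MvPolynomial.aeval
          (Sum.elim (fun i : Fin _ ↦ g.charpoly.coeff i)
            (fun j : Fin _ ↦ g'.charpoly.coeff j))).toRingHom := by
  nontriviality K
  rw [map_universalKroneckerCharpoly]
  exact charpoly_tensorProduct_map_eq_charpoly_kronecker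
    (charpoly_map_companionMatrix_freeMonic g.charpoly_monic g.charpoly_natDegree)
    (charpoly_map_companionMatrix_freeMonic g'.charpoly_monic g'.charpoly_natDegree)

theorem coeff_charpoly_tensorProduct_map_mem {g : V →ₗ[K] V} {g' : V' →ₗ[K] V'} {R : Subring K}
    (hg : ∀ i, g.charpoly.coeff i ∈ R) (hg' : ∀ i, g'.charpoly.coeff i ∈ R) (k : ℕ) :
    (TensorProduct.map g g').charpoly.coeff k ∈ R := by
  rw [charpoly_tensorProduct_map, coeff_map]
  exact MvPolynomial.eval₂_mem (fun _ _ ↦ intCast_mem R _)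
    (Sum.forall.mpr ⟨fun i ↦ hg i, fun j ↦ hg' j⟩)

end Universal

theorem charpoly_tensorProduct_coeff_universal_general.{u, v, w} (n n' k : ℕ) :
    (∃ P : MvPolynomial (Fin (n + 1) ⊕ Fin (n' + 1)) ℤ,
      ∀ (K : Type u) [CommRing K]
        (V : Type v) (V' : Type w) [AddCommGroup V] [Module K V] [AddCommGroup V'] [Module K V']
        [Module.Free K V] [Module.Finite K V] [Module.Free K V'] [Module.Finite K V'],
        Module.finrank K V = n → Module.finrank K V' = n' →
        ∀ (g : V →ₗ[K] V) (g' : V' →ₗ[K] V'),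
          (TensorProduct.map g g').charpoly.coeff k
            = MvPolynomial.aeval
                (Sum.elim (fun i : Fin (n + 1) => g.charpoly.coeff i)
                  (fun j : Fin (n' + 1) => g'.charpoly.coeff j)) P)
    ∧
    (∀ (K : Type u) [CommRing K]
      (V : Type v) (V' : Type w) [AddCommGroup V] [Module K V] [AddCommGroup V'] [Module K V']
      [Module.Free K V] [Module.Finite K V] [Module.Free K V'] [Module.Finite K V']
      (g : V →ₗ[K] V) (g' : V' →ₗ[K] V') (R : Subring K),
      (∀ i, g.charpoly.coeff i ∈ R) → (∀ i, g'.charpoly.coeff i ∈ R) →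
      ∀ i, (TensorProduct.map g g').charpoly.coeff i ∈ R) := by
  refine ⟨⟨MvPolynomial.rename (Sum.map Fin.castSucc Fin.castSucc)
    ((universalKroneckerCharpoly n n').coeff k), ?_⟩,
    fun K _ V V' _ _ _ _ _ _ _ _ g g' R ↦ coeff_charpoly_tensorProduct_map_mem⟩
  rintro K _ V V' _ _ _ _ _ _ _ _ rfl rfl g g'
  rw [charpoly_tensorProduct_map, coeff_map, MvPolynomial.aeval_rename, Sum.elim_comp_map]
  rfl

/-- Each coefficient of the characteristic polynomial of `g ⊗ g'` on
`V ⊗ V'` is given by a universal integral polynomial (independent of the field `K` and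
of `g`, `g'`, depending only on the dimensions) in the coefficients of the characteristic
polynomials of `g` and `g'`.  In particular, if both characteristic polynomials have all
their coefficients in a subring `R ⊆ K`, then so does the characteristic polynomial of
`g ⊗ g'`. -/
theorem charpoly_tensorProduct_coeff_universal (n n' k : ℕ) :
    (∃ P : MvPolynomial (Fin (n + 1) ⊕ Fin (n' + 1)) ℤ,
      ∀ (K : Type) [Field K]
        (V V' : Type) [AddCommGroup V] [Module K V] [AddCommGroup V'] [Module K V']
        [FiniteDimensional K V] [FiniteDimensional K V'],
        Module.finrank K V = n → Module.finrank K V' = n' →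
        ∀ (g : V →ₗ[K] V) (g' : V' →ₗ[K] V'),
          (TensorProduct.map g g').charpoly.coeff k
            = MvPolynomial.aeval
                (Sum.elim (fun i : Fin (n + 1) => g.charpoly.coeff i)
                  (fun j : Fin (n' + 1) => g'.charpoly.coeff j)) P)
    ∧
    (∀ (K : Type) [Field K]
      (V V' : Type) [AddCommGroup V] [Module K V] [AddCommGroup V'] [Module K V']
      [FiniteDimensional K V] [FiniteDimensional K V']
      (g : V →ₗ[K] V) (g' : V' →ₗ[K] V') (R : Subring K),
      (∀ i, g.charpoly.coeff i ∈ R) → (∀ i, g'.charpoly.coeff i ∈ R) →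
      ∀ i, (TensorProduct.map g g').charpoly.coeff i ∈ R) :=
  let ⟨⟨P, hP⟩, hR⟩ := charpoly_tensorProduct_coeff_universal_general n n' k
  ⟨⟨P, fun K _ V V' _ _ _ _ _ _ ↦ hP K V V'⟩, fun K _ V V' _ _ _ _ _ _ ↦ hR K V V'⟩
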